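/- arXiv:math/0509548 — 2 statements merged into one kernel-verified Lean document; each statement's English description precedes it below -/
import Mathlib

section
/- Let Ω be a commutative semigroup and K a ℚ-algebra. The mould J defined by J^∅ = 0 and J^w = (−1)^{r+1}/r for every word w of length r ≥ 1 is alternel: Σ_{w∈csh(u,v)} J^w = 0 for all nonempty words u, v. -/
namespace Moulds

variable {X : Type*} {K : Type*}

/-- The multiset of shuffles (interleavings) of two words, counted with multiplicity. -/
def shuffles : List X → List X → Multiset (List X)
  | [], v => {v}
  | a :: u, [] => {a :: u}
  | a :: u, b :: v =>
      (shuffles u (b :: v)).map (a :: ·) + (shuffles (a :: u) v).map (b :: ·)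
termination_by u v => u.length + v.length

/-- The multiset of contracting shuffles of two words: interleavings in which any
pair of adjacent letters coming one from each word may be contracted to their sum. -/
def cshuffles [Add X] : List X → List X → Multiset (List X)
  | [], v => {v}
  | a :: u, [] => {a :: u}
  | a :: u, b :: v =>
      (cshuffles u (b :: v)).map (a :: ·) + (cshuffles (a :: u) v).map (b :: ·)
        + (cshuffles u v).map ((a + b) :: ·)
termination_by u v => u.length + v.length

/-- Shuffle sum Σ_{w ∈ sh(u,v)} M^w (with multiplicity). -/
def shuffleSum [AddCommMonoid K] (M : List X → K) (u v : List X) : K :=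
  ((shuffles u v).map M).sum

/-- Contracting shuffle sum Σ_{w ∈ csh(u,v)} M^w (with multiplicity). -/
def cshuffleSum [Add X] [AddCommMonoid K] (M : List X → K) (u v : List X) : K :=
  ((cshuffles u v).map M).sum

/-- A mould is alternal if it vanishes on ∅ and all its nontrivial shuffle sums vanish. -/
def Alternal [AddCommMonoid K] (M : List X → K) : Prop :=
  M [] = 0 ∧ ∀ u v : List X, u ≠ [] → v ≠ [] → shuffleSum M u v = 0

/-- A mould is symétral if M^∅ = 1 and shuffle sums multiply. -/
def Symetral [CommRing K] (M : List X → K) : Prop :=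
  M [] = 1 ∧ ∀ u v : List X, shuffleSum M u v = M u * M v

/-- A mould is alternel if it vanishes on ∅ and all its nontrivial contracting
shuffle sums vanish. -/
def Alternel [Add X] [AddCommMonoid K] (M : List X → K) : Prop :=
  M [] = 0 ∧ ∀ u v : List X, u ≠ [] → v ≠ [] → cshuffleSum M u v = 0

/-- A mould is symétrel if M^∅ = 1 and contracting shuffle sums multiply. -/
def Symetrel [Add X] [CommRing K] (M : List X → K) : Prop :=
  M [] = 1 ∧ ∀ u v : List X, cshuffleSum M u v = M u * M v

/-- Mould multiplication: (M × N)^w = Σ_{w = w¹w²} M^{w¹} N^{w²}. -/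
def mmul [CommRing K] (M N : List X → K) : List X → K :=
  fun w => ∑ i ∈ Finset.range (w.length + 1), M (w.take i) * N (w.drop i)

/-- The unit mould 1^•, equal to 1 on the empty word and 0 elsewhere. -/
def mone [One K] [Zero K] : List X → K :=
  fun w => match w with | [] => 1 | _ => 0

/-- The mould I^•, equal to 1 on one-letter words and 0 elsewhere. -/
def mId [One K] [Zero K] : List X → K :=
  fun w => if w.length = 1 then 1 else 0

/-- All factorizations of a word into nonempty consecutive blocks; a block is
recorded as (first letter, rest of the block). -/
def splits : List X → List (List (X × List X))
  | [] => [[]]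
  | a :: t =>
      (splits t).flatMap fun p =>
        match p with
        | [] => [[(a, ([] : List X))]]
        | (b, r) :: ps => [(a, b :: r) :: ps, (a, ([] : List X)) :: (b, r) :: ps]

/-- The sum ‖·‖ of the letters of a (nonempty) block. -/
def blockSum [Add X] (b : X × List X) : X := b.2.foldl (· + ·) b.1

/-- Mould composition:
(M ∘ N)^w = Σ_{w = w¹⋯wˢ, wⁱ ≠ ∅} M^{(‖w¹‖,…,‖wˢ‖)} N^{w¹} ⋯ N^{wˢ}. -/
def mcomp [Add X] [CommRing K] (M N : List X → K) : List X → K :=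
  fun w => ((splits w).map
    (fun p => M (p.map blockSum) * (p.map (fun b => N (b.1 :: b.2))).prod)).sum

/-- The monomial series associated to a word. -/
def mono [DecidableEq X] [One K] [Zero K] (w : List X) : List X → K :=
  fun w' => if w' = w then 1 else 0

end Moulds

namespace Moulds

/- STATEMENT 7: Over a commutative semigroup Ω and a ℚ-algebra K, the mould J with
J^∅ = 0 and J^w = (−1)^{r+1}/r on words of length r ≥ 1 is alternel. -/

variable {Ω : Type*} [AddCommSemigroup Ω] {K : Type*} [CommRing K] [Algebra ℚ K]

/-- The elementary mould J: J^∅ = 0 and J^w = (−1)^{r+1}/r for words of length r ≥ 1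
(in ℚ, division by zero is zero, so the formula also gives J^∅ = 0). -/
def Jmould (Ω : Type*) (K : Type*) [CommRing K] [Algebra ℚ K] : List Ω → K :=
  fun w => algebraMap ℚ K ((-1) ^ (w.length + 1) / w.length)

/-!
The binomial mould `w ↦ (k choose |w|)` is symétrel for every `k : ℕ`, by Pascal's rule. Both sides
of its shuffle relations are polynomials in `k`, so `w ↦ (x choose |w|)` is symétrel over `ℚ[x]`.
Since `(x choose r)` vanishes at `x = 0` for `r ≥ 1`, taking coefficients of `x` turns products
into `0`; the coefficient of `x` in `(x choose r) = (x / r) (x - 1 choose r - 1)` is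
`(-1 choose r - 1) / r = (-1)^(r + 1) / r`. In other words, `J` is the derivative at `t = 0` of the
one-parameter family `(1 + y)^t`, namely the logarithm `log (1 + y)`.
-/

open Polynomial

section ContractingShuffleSums

variable {A E : Type*} [Add A] [AddCommMonoid E] (M N : List A → E)

@[simp]
theorem cshuffleSum_nil_left (v : List A) : cshuffleSum M [] v = M v := by
  simp [cshuffleSum, cshuffles]

@[simp]
theorem cshuffleSum_nil_right (u : List A) : cshuffleSum M u [] = M u := by
  cases u <;> simp [cshuffleSum, cshuffles]

theorem cshuffleSum_cons_cons (a b : A) (u v : List A) :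
    cshuffleSum M (a :: u) (b :: v) =
      cshuffleSum (fun w => M (a :: w)) u (b :: v) + cshuffleSum (fun w => M (b :: w)) (a :: u) v +
        cshuffleSum (fun w => M ((a + b) :: w)) u v := by
  simp [cshuffleSum, cshuffles]

@[simp]
theorem cshuffleSum_zero (u v : List A) : cshuffleSum (fun _ => (0 : E)) u v = 0 :=
  Multiset.sum_map_zero

theorem cshuffleSum_add (u v : List A) :
    cshuffleSum (fun w => M w + N w) u v = cshuffleSum M u v + cshuffleSum N u v :=
  Multiset.sum_map_add

theorem map_cshuffleSum {E' : Type*} [AddCommMonoid E'] (φ : E →+ E') (u v : List A) :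
    φ (cshuffleSum M u v) = cshuffleSum (fun w => φ (M w)) u v := by
  simp [cshuffleSum, map_multiset_sum]

theorem Alternel.map {E' : Type*} [AddCommMonoid E'] {M : List A → E} (hM : Alternel M)
    (φ : E →+ E') : Alternel fun w => φ (M w) := by
  refine ⟨by simp [hM.1], fun u v hu hv => ?_⟩
  rw [← map_cshuffleSum, hM.2 u v hu hv, map_zero]

end ContractingShuffleSums

section PolynomialMoulds

variable {A R : Type*} [Add A] [CommRing R]

theorem Symetrel.alternel_coeff_one {M : List A → R[X]} (hM : Symetrel M)
    (hM₀ : ∀ w ≠ [], (M w).coeff 0 = 0) : Alternel fun w => (M w).coeff 1 := by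
  refine ⟨by simp [hM.1, coeff_one], fun u v hu hv => ?_⟩
  calc cshuffleSum (fun w => (M w).coeff 1) u v
      = (cshuffleSum M u v).coeff 1 := (map_cshuffleSum M (lcoeff R 1).toAddMonoidHom u v).symm
    _ = (M u * M v).coeff 1 := by rw [hM.2]
    _ = 0 := by simp [mul_coeff_one, hM₀ u hu, hM₀ v hv]

theorem eq_of_eval_natCast_eq [IsDomain R] [CharZero R] {p q : R[X]}
    (h : ∀ k : ℕ, p.eval (k : R) = q.eval (k : R)) : p = q :=
  eq_of_infinite_eval_eq p q <|
    (Set.infinite_range_of_injective Nat.cast_injective).mono (Set.range_subset_iff.2 h)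

theorem symetrel_of_eval_natCast [IsDomain R] [CharZero R] {M : List A → R[X]}
    (h : ∀ k : ℕ, Symetrel fun w => (M w).eval (k : R)) : Symetrel M := by
  refine ⟨eq_of_eval_natCast_eq fun k => by simpa using (h k).1,
    fun u v => eq_of_eval_natCast_eq fun k => ?_⟩
  calc (cshuffleSum M u v).eval (k : R)
      = cshuffleSum (fun w => (M w).eval (k : R)) u v :=
        map_cshuffleSum M (evalRingHom (k : R)).toAddMonoidHom u v
    _ = (M u * M v).eval (k : R) := by rw [(h k).2, eval_mul]

end PolynomialMoulds

section BinomialMoulds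

variable (A : Type*) [Add A]

theorem symetrel_natCast_choose (R : Type*) [CommRing R] (k : ℕ) :
    Symetrel fun w : List A => (k.choose w.length : R) := by
  refine ⟨by simp, fun u v => ?_⟩
  induction k generalizing u v with
  | zero =>
    cases u <;> cases v <;> simp [cshuffleSum_cons_cons]
  | succ k ih =>
    rcases u with - | ⟨a, u⟩
    · simp
    rcases v with - | ⟨b, v⟩
    · simp
    have pascal_shift : cshuffleSum (fun w => ((k + 1).choose w.length : R)) (a :: u) (b :: v) =
        cshuffleSum (fun w => (k.choose w.length : R)) u (b :: v) +
        cshuffleSum (fun w => (k.choose w.length : R)) (a :: u) v +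
        cshuffleSum (fun w => (k.choose w.length : R)) u v +
        cshuffleSum (fun w => (k.choose w.length : R)) (a :: u) (b :: v) := by
      simp only [cshuffleSum_cons_cons _ a b u v, List.length_cons, Nat.choose_succ_succ',
        Nat.cast_add, cshuffleSum_add]
      abel
    simp only [pascal_shift, ih, List.length_cons, Nat.choose_succ_succ', Nat.cast_add]
    ring

theorem ring_choose_neg_one (R : Type*) [Ring R] [BinomialRing R] (n : ℕ) :
    Ring.choose (-1 : R) n = (-1) ^ n := by
  rw [Ring.choose_neg', Ring.multichoose_one, Int.negOnePow_def]
  simp [Units.smul_def]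

theorem succ_nsmul_ring_choose {R : Type*} [Ring R] [BinomialRing R] (x : R) (n : ℕ) :
    (n + 1) • Ring.choose x (n + 1) = x * Ring.choose (x - 1) n := by
  simpa using Ring.choose_smul_choose x (Nat.le_add_left 1 n)

section

variable {R : Type*} [CommRing R] [BinomialRing R] [BinomialRing R[X]]

theorem eval_ring_choose (p : R[X]) (x : R) (r : ℕ) :
    (Ring.choose p r).eval x = Ring.choose (p.eval x) r :=
  Ring.map_choose (evalRingHom x) p r

variable (R)

theorem symetrel_ring_choose_X [IsDomain R] [CharZero R] :
    Symetrel fun w : List A => Ring.choose (X : R[X]) w.length :=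
  symetrel_of_eval_natCast fun k => by
    simpa only [eval_ring_choose, eval_X, Ring.choose_natCast] using symetrel_natCast_choose A R k

theorem coeff_zero_ring_choose_X {r : ℕ} (hr : r ≠ 0) :
    (Ring.choose (X : R[X]) r).coeff 0 = 0 := by
  rw [coeff_zero_eq_eval_zero, eval_ring_choose, eval_X,
    Ring.choose_zero_pos R (Nat.pos_of_ne_zero hr)]

theorem succ_mul_coeff_one_ring_choose_X (n : ℕ) :
    (n + 1) * (Ring.choose (X : R[X]) (n + 1)).coeff 1 = (-1) ^ n :=
  calc
    _ = ((n + 1) • Ring.choose (X : R[X]) (n + 1)).coeff 1 := by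
      rw [coeff_smul, nsmul_eq_mul, Nat.cast_succ]
    _ = (Ring.choose (X - 1 : R[X]) n).eval 0 := by
      rw [succ_nsmul_ring_choose, coeff_X_mul, coeff_zero_eq_eval_zero]
    _ = Ring.choose (-1) n := by simp [eval_ring_choose]
    _ = (-1) ^ n := ring_choose_neg_one R n

end

theorem coeff_one_ring_choose_X (F : Type*) [Field F] [CharZero F] (r : ℕ) :
    (Ring.choose (X : F[X]) r).coeff 1 = (-1) ^ (r + 1) / r := by
  rcases r with - | n
  · simp [coeff_one]
  rw [eq_div_iff (Nat.cast_ne_zero.2 n.succ_ne_zero), mul_comm, Nat.cast_succ,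
    succ_mul_coeff_one_ring_choose_X]
  ring

end BinomialMoulds

theorem Jmould_alternel_general {A : Type*} [Add A] : Alternel (Jmould A K) := by
  have alternel_coeff : Alternel fun w : List A => (Ring.choose (X : ℚ[X]) w.length).coeff 1 :=
    (symetrel_ring_choose_X A ℚ).alternel_coeff_one fun w hw =>
      coeff_zero_ring_choose_X ℚ (List.length_pos_iff.2 hw).ne'
  simp only [coeff_one_ring_choose_X] at alternel_coeff
  exact alternel_coeff.map (algebraMap ℚ K).toAddMonoidHom

theorem Jmould_alternel : Alternel (Jmould Ω K) :=
  Jmould_alternel_general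

end Moulds
end

section
/- Let K be a ℚ-algebra and Ω a set. For every symétral mould M on Ω there exists an alternal mould N such that M = exp(N), where exp(N) = Σ_{n≥0} N^{×n}/n! with N^{×0} = 1^• (this sum is pointwise finite on each word, since N^∅ = 0 implies (N^{×n})^w = 0 whenever n exceeds the length of w). -/
namespace Moulds

/- STATEMENT 10: Over a ℚ-algebra K, every symétral mould M is the exponential of
some alternal mould N: M = exp(N) = Σ_{n≥0} N^{×n}/n!, the sum being pointwise
finite since (N^{×n})^w = 0 for n > length(w) when N^∅ = 0. -/

variable {Ω : Type*} {K : Type*} [CommRing K] [Algebra ℚ K]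

/-- Iterated mould multiplication power, N^{×0} = 1^•. -/
def mpow (N : List Ω → K) : ℕ → (List Ω → K)
  | 0 => mone
  | n + 1 => mmul N (mpow N n)

/-- The mould exponential exp(N) = Σ_{n≥0} N^{×n}/n!; since N^∅ = 0 the terms with
n > length(w) vanish on w, so the sum may be truncated at n = length(w). -/
def expMould (N : List Ω → K) : List Ω → K :=
  fun w => ∑ n ∈ Finset.range (w.length + 1),
    algebraMap ℚ K (1 / n.factorial) * mpow N n w

/-!
By the binomial theorem, `M^{×k}` evaluated on a word is a polynomial in `k`, so that `M^t` makes
sense for an indeterminate `t`. Over a `ℚ`-algebra a polynomial is determined by its values at the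
natural numbers, hence `M^{t + k} = M^t × M^{×k}`, and `M^t` is symétral because every `M^{×k}` is.
Let `N` be the derivative of `M^t` at `t = 0`. Differentiating the shuffle relations of `M^t` at
`t = 0` shows that `N` is alternal, while `(M^t)' = N × M^t` forces the coefficient of `t^n` in
`M^t` to be `N^{×n} / n!`; now set `t = 1`.
-/

section Multiplication

variable {R : Type*} [CommRing R]

theorem mmul_nil (M N : List Ω → R) : mmul M N [] = M [] * N [] := by
  simp [mmul]

theorem mmul_comp_cons (M N : List Ω → R) (a : Ω) :
    mmul M N ∘ List.cons a = M [] • (N ∘ List.cons a) + mmul (M ∘ List.cons a) N := by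
  funext w
  simp [mmul, Finset.sum_range_succ', add_comm (M [] * _)]

theorem mmul_cons (M N : List Ω → R) (a : Ω) (w : List Ω) :
    mmul M N (a :: w) = M [] * N (a :: w) + mmul (M ∘ List.cons a) N w :=
  congrFun (mmul_comp_cons M N a) w

theorem add_mmul (M M' N : List Ω → R) : mmul (M + M') N = mmul M N + mmul M' N := by
  funext w
  simp [mmul, add_mul, Finset.sum_add_distrib]

theorem smul_mmul (c : R) (M N : List Ω → R) : mmul (c • M) N = c • mmul M N := by
  funext w
  simp [mmul, mul_assoc, Finset.mul_sum]

theorem mmul_add (M N N' : List Ω → R) : mmul M (N + N') = mmul M N + mmul M N' := by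
  funext w
  simp [mmul, mul_add, Finset.sum_add_distrib]

theorem mmul_smul (c : R) (M N : List Ω → R) : mmul M (c • N) = c • mmul M N := by
  funext w
  simp [mmul, mul_left_comm, Finset.mul_sum]

theorem mmul_assoc (M N P : List Ω → R) : mmul (mmul M N) P = mmul M (mmul N P) := by
  funext w
  induction w generalizing M with
  | nil => simp only [mmul_nil, mul_assoc]
  | cons a w ih =>
    rw [mmul_cons, mmul_cons M, mmul_comp_cons, add_mmul, smul_mmul, Pi.add_apply, ih,
      mmul_nil, mmul_cons N P, Pi.smul_apply, smul_eq_mul]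
    ring

theorem mone_mmul (N : List Ω → R) : mmul mone N = N := by
  funext w
  cases w with
  | nil => simp [mmul_nil, mone]
  | cons a w => simp [mmul, Finset.sum_range_succ', mone]

theorem mmul_mone (M : List Ω → R) : mmul M mone = M := by
  funext w
  induction w generalizing M with
  | nil => simp [mmul_nil, mone]
  | cons a w ih => simp [mmul_cons, mone, ih]

end Multiplication

section Powers

variable {R : Type*} [CommRing R]

theorem mpow_one (M : List Ω → R) : mpow M 1 = M :=
  mmul_mone M

theorem mpow_add (M : List Ω → R) (k l : ℕ) :
    mpow M (k + l) = mmul (mpow M k) (mpow M l) := by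
  induction k with
  | zero => rw [Nat.zero_add, mpow, mone_mmul]
  | succ k ih => rw [Nat.succ_add, mpow, mpow, ih, mmul_assoc]

theorem mpow_eq_zero_of_length_lt {N : List Ω → R} (hN : N [] = 0) {n : ℕ} {w : List Ω}
    (hw : w.length < n) : mpow N n w = 0 := by
  induction n generalizing w with
  | zero => omega
  | succ n ih =>
    rw [mpow, mmul]
    refine Finset.sum_eq_zero fun i hi => ?_
    rw [Finset.mem_range] at hi
    rcases i.eq_zero_or_pos with rfl | hi_pos
    · rw [List.take_zero, hN, zero_mul]
    · rw [ih (by rw [List.length_drop]; omega), mul_zero]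

/-- The left regular representation of the algebra of moulds. It turns powers of moulds into
powers in the ring `Module.End`, where the binomial theorem is available. -/
def mmulLeft : (List Ω → R) →ₗ[R] Module.End R (List Ω → R) :=
  LinearMap.mk₂ R mmul add_mmul smul_mmul mmul_add mmul_smul

theorem mpow_eq_mmulLeft_pow (M : List Ω → R) (n : ℕ) : mpow M n = (mmulLeft M ^ n) mone := by
  induction n with
  | zero => rfl
  | succ n ih => rw [pow_succ', Module.End.mul_apply, ← ih]; rfl

theorem mpow_mone_add (D : List Ω → R) (k : ℕ) :
    mpow (mone + D) k = ∑ n ∈ Finset.range (k + 1), k.choose n • mpow D n := by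
  have mmulLeft_mone : mmulLeft (mone : List Ω → R) = 1 := LinearMap.ext mone_mmul
  rw [mpow_eq_mmulLeft_pow, map_add, mmulLeft_mone, add_comm, (Commute.one_right _).add_pow,
    LinearMap.sum_apply]
  refine Finset.sum_congr rfl fun n _ => ?_
  rw [one_pow, mul_one, ← nsmul_eq_mul', LinearMap.smul_apply, mpow_eq_mmulLeft_pow]

theorem mpow_eq_sum_choose_mul {M : List Ω → R} (hM : M [] = 1) (k : ℕ) (w : List Ω) :
    mpow M k w =
      ∑ n ∈ Finset.range (w.length + 1), (k.choose n : R) * mpow (M - mone) n w := by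
  have hD : (M - mone : List Ω → R) [] = 0 := by simp [hM, mone]
  conv_lhs => rw [← add_sub_cancel mone M, mpow_mone_add, Finset.sum_apply]
  refine Finset.sum_congr_of_eq_on_inter (fun n _ hn => ?_) (fun n _ hn => ?_) fun n _ _ => ?_
  · rw [Pi.smul_apply, mpow_eq_zero_of_length_lt hD (by simpa using hn), smul_zero]
  · rw [Nat.choose_eq_zero_of_lt (by simpa using hn), Nat.cast_zero, zero_mul]
  · rw [Pi.smul_apply, nsmul_eq_mul]

end Powers

section Shuffles

variable {R S : Type*} [CommRing R]

theorem shuffleSum_nil_left [AddCommMonoid S] (M : List Ω → S) (v : List Ω) :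
    shuffleSum M [] v = M v := by
  simp [shuffleSum, shuffles]

theorem shuffleSum_nil_right [AddCommMonoid S] (M : List Ω → S) (u : List Ω) :
    shuffleSum M u [] = M u := by
  cases u <;> simp [shuffleSum, shuffles]

theorem shuffleSum_cons_cons [AddCommMonoid S] (M : List Ω → S) (a b : Ω) (u v : List Ω) :
    shuffleSum M (a :: u) (b :: v) =
      shuffleSum (M ∘ List.cons a) u (b :: v) + shuffleSum (M ∘ List.cons b) (a :: u) v := by
  simp [shuffleSum, shuffles]

theorem shuffleSum_add [AddCommMonoid S] (M N : List Ω → S) (u v : List Ω) :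
    shuffleSum (M + N) u v = shuffleSum M u v + shuffleSum N u v :=
  Multiset.sum_map_add

theorem shuffleSum_smul (c : R) (M : List Ω → R) (u v : List Ω) :
    shuffleSum (c • M) u v = c * shuffleSum M u v :=
  Multiset.sum_map_mul_left

theorem map_shuffleSum {T F : Type*} [AddCommMonoid S] [AddCommMonoid T] [FunLike F S T]
    [AddMonoidHomClass F S T] (f : F) (M : List Ω → S) (u v : List Ω) :
    f (shuffleSum M u v) = shuffleSum (f ∘ M) u v := by
  simp [shuffleSum, map_multiset_sum]

-- In Hopf-algebraic terms: deconcatenation, the dual of `mmul`, respects the shuffle product.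
theorem shuffleSum_mmul (M N : List Ω → R) (u v : List Ω) :
    shuffleSum (mmul M N) u v =
      ∑ i ∈ Finset.range (u.length + 1), ∑ j ∈ Finset.range (v.length + 1),
        shuffleSum M (u.take i) (v.take j) * shuffleSum N (u.drop i) (v.drop j) := by
  induction u, v using shuffles.induct generalizing M with
  | case1 v => simp [shuffleSum_nil_left, mmul]
  | case2 a u => simp [shuffleSum_nil_right, mmul]
  | case3 a u b v ih_left ih_right =>
    have unfold_left : shuffleSum (mmul M N) (a :: u) (b :: v) =
        M [] * shuffleSum N (a :: u) (b :: v) +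
          shuffleSum (mmul (M ∘ List.cons a) N) u (b :: v) +
          shuffleSum (mmul (M ∘ List.cons b) N) (a :: u) v := by
      simp only [shuffleSum_cons_cons, mmul_comp_cons, shuffleSum_add, shuffleSum_smul]
      ring
    rw [unfold_left, ih_left, ih_right]
    simp only [List.length_cons, Finset.sum_range_succ' _ (u.length + 1),
      Finset.sum_range_succ' _ (v.length + 1), List.take_succ_cons, List.drop_succ_cons,
      List.take_zero, List.drop_zero, shuffleSum_nil_left, shuffleSum_nil_right,
      shuffleSum_cons_cons M, Function.comp_apply, add_mul, Finset.sum_add_distrib]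
    ring

theorem Symetral.mmul {M N : List Ω → R} (hM : Symetral M) (hN : Symetral N) :
    Symetral (mmul M N) := by
  refine ⟨by rw [mmul_nil, hM.1, hN.1, mul_one], fun u v => ?_⟩
  simp only [shuffleSum_mmul, hM.2, hN.2, Moulds.mmul, Finset.sum_mul_sum, mul_mul_mul_comm]

theorem symetral_mone : Symetral (mone : List Ω → R) := by
  refine ⟨rfl, fun u v => ?_⟩
  match u, v with
  | [], v => simp [shuffleSum_nil_left, mone]
  | a :: u, [] => simp [shuffleSum_nil_right, mone]
  | a :: u, b :: v =>
    have mone_comp_cons (c : Ω) : (mone : List Ω → R) ∘ List.cons c = 0 := rfl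
    rw [shuffleSum_cons_cons, mone_comp_cons, mone_comp_cons]
    simp [shuffleSum, mone]

theorem Symetral.mpow {M : List Ω → R} (hM : Symetral M) (n : ℕ) : Symetral (mpow M n) := by
  induction n with
  | zero => exact symetral_mone
  | succ n ih => exact hM.mmul ih

end Shuffles

section Logarithm

open Polynomial

attribute [local instance] IsAddTorsionFree.of_module_rat

theorem eq_zero_of_forall_eval_natCast_eq_zero {R : Type*} [CommRing R] [IsAddTorsionFree R]
    {p : R[X]} (hp : ∀ k : ℕ, p.eval (k : R) = 0) : p = 0 := by
  -- The `d`-th finite difference of `p` at `0`, where `d = natDegree p`, is `d! * leadingCoeff p`.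
  have h := congrFun (fwdDiff_iter_degree_eq_factorial p) 0
  simp only [fwdDiff_iter_eq_sum_shift, zero_add, nsmul_one, hp, smul_zero,
    Finset.sum_const_zero, Pi.smul_apply, Pi.natCast_apply, smul_eq_mul] at h
  rw [← nsmul_eq_mul', eq_comm, nsmul_eq_zero_iff_right p.natDegree.factorial_ne_zero] at h
  exact leadingCoeff_eq_zero.1 h

theorem eq_of_forall_eval_natCast_eq {R : Type*} [CommRing R] [IsAddTorsionFree R]
    {p q : R[X]} (h : ∀ k : ℕ, p.eval (k : R) = q.eval (k : R)) : p = q :=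
  sub_eq_zero.1 <| eq_zero_of_forall_eval_natCast_eq_zero fun k => by
    rw [eval_sub, h, sub_self]

theorem algebraMap_one_div_factorial_mul_factorial (n : ℕ) :
    algebraMap ℚ K (1 / n.factorial) * n.factorial = 1 := by
  rw [← map_natCast (algebraMap ℚ K), ← map_mul,
    one_div_mul_cancel (Nat.cast_ne_zero.2 n.factorial_ne_zero), map_one]

/-- The mould `M^t` of polynomials in the exponent `t`, given by Newton's binomial series
`∑ₙ (t choose n) (M - 1)^{×n}`; on `w` the terms with `n > w.length` vanish when `M [] = 1`. -/
noncomputable def mpowPoly (M : List Ω → K) (w : List Ω) : K[X] :=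
  ∑ n ∈ Finset.range (w.length + 1),
    C (algebraMap ℚ K (1 / n.factorial) * mpow (M - mone) n w) * descPochhammer K n

/-- The logarithm of a mould `M` with `M [] = 1`, as the derivative at `t = 0` of `M^t`. -/
noncomputable def mlog (M : List Ω → K) (w : List Ω) : K :=
  (mpowPoly M w).coeff 1

theorem eval_natCast_mpowPoly {M : List Ω → K} (hM : M [] = 1) (k : ℕ) (w : List Ω) :
    (mpowPoly M w).eval (k : K) = mpow M k w := by
  rw [mpow_eq_sum_choose_mul hM, mpowPoly, eval_finsetSum]
  refine Finset.sum_congr rfl fun n _ => ?_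
  rw [eval_mul, eval_C, descPochhammer_eval_eq_descFactorial,
    Nat.descFactorial_eq_factorial_mul_choose, Nat.cast_mul]
  linear_combination
    k.choose n * mpow (M - mone) n w * algebraMap_one_div_factorial_mul_factorial (K := K) n

theorem coeff_zero_mpowPoly {M : List Ω → K} (hM : M [] = 1) (w : List Ω) :
    (mpowPoly M w).coeff 0 = mone w := by
  rw [coeff_zero_eq_eval_zero, ← Nat.cast_zero, eval_natCast_mpowPoly hM, mpow]

theorem mpowPoly_nil (M : List Ω → K) : mpowPoly M [] = 1 := by
  simp only [mpowPoly, List.length_nil, zero_add, Finset.sum_range_one, descPochhammer_zero,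
    mpow, mone, Nat.factorial_zero, Nat.cast_one, div_one, map_one, mul_one]

theorem mlog_nil (M : List Ω → K) : mlog M [] = 0 := by
  rw [mlog, mpowPoly_nil, coeff_one, if_neg one_ne_zero]

theorem mpowPoly_comp_X_add_natCast {M : List Ω → K} (hM : M [] = 1) (k : ℕ) (w : List Ω) :
    (mpowPoly M w).comp (X + (k : K[X])) = mmul (mpowPoly M) (C ∘ mpow M k) w := by
  refine eq_of_forall_eval_natCast_eq fun l => ?_
  calc ((mpowPoly M w).comp (X + (k : K[X]))).eval (l : K)
      = mpow M (l + k) w := by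
        rw [eval_comp, eval_add, eval_X, eval_natCast, ← Nat.cast_add, eval_natCast_mpowPoly hM]
    _ = mmul (mpow M l) (mpow M k) w := by rw [mpow_add]
    _ = (mmul (mpowPoly M) (C ∘ mpow M k) w).eval (l : K) := by
        simp only [mmul, eval_finsetSum, eval_mul, eval_natCast_mpowPoly hM, Function.comp_apply,
          eval_C]

theorem derivative_mpowPoly {M : List Ω → K} (hM : M [] = 1) (w : List Ω) :
    derivative (mpowPoly M w) = mmul (C ∘ mlog M) (mpowPoly M) w := by
  refine eq_of_forall_eval_natCast_eq fun k => ?_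
  have derivative_eval_zero (x : List Ω) : (derivative (mpowPoly M x)).eval 0 = mlog M x := by
    rw [← coeff_zero_eq_eval_zero, coeff_derivative, Nat.cast_zero, zero_add, zero_add, mul_one,
      mlog]
  -- Differentiate `M^{t + k} = M^t × M^{×k}` at `t = 0`.
  calc (derivative (mpowPoly M w)).eval (k : K)
      = (derivative ((mpowPoly M w).comp (X + (k : K[X])))).eval 0 := by simp [derivative_comp]
    _ = (derivative (mmul (mpowPoly M) (C ∘ mpow M k) w)).eval 0 := by
        rw [mpowPoly_comp_X_add_natCast hM]
    _ = mmul (mlog M) (mpow M k) w := by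
        simp [mmul, eval_finsetSum, derivative_eval_zero]
    _ = (mmul (C ∘ mlog M) (mpowPoly M) w).eval (k : K) := by
        simp [mmul, eval_finsetSum, eval_natCast_mpowPoly hM]

theorem factorial_mul_coeff_mpowPoly {M : List Ω → K} (hM : M [] = 1) (n : ℕ) (w : List Ω) :
    n.factorial * (mpowPoly M w).coeff n = mpow (mlog M) n w := by
  induction n generalizing w with
  | zero => rw [coeff_zero_mpowPoly hM, Nat.factorial_zero, Nat.cast_one, one_mul, mpow]
  | succ n ih =>
    calc ((n + 1).factorial : K) * (mpowPoly M w).coeff (n + 1)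
        = n.factorial * (derivative (mpowPoly M w)).coeff n := by
          rw [coeff_derivative, Nat.factorial_succ]
          push_cast
          ring
      _ = mmul (mlog M) (fun x => n.factorial * (mpowPoly M x).coeff n) w := by
          simp only [derivative_mpowPoly hM, mmul, finsetSum_coeff, Function.comp_apply,
            coeff_C_mul, Finset.mul_sum, mul_left_comm]
      _ = mpow (mlog M) (n + 1) w := by rw [funext ih, mpow]

theorem coeff_mpowPoly {M : List Ω → K} (hM : M [] = 1) (n : ℕ) (w : List Ω) :
    (mpowPoly M w).coeff n = algebraMap ℚ K (1 / n.factorial) * mpow (mlog M) n w := by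
  rw [← factorial_mul_coeff_mpowPoly hM, ← mul_assoc,
    algebraMap_one_div_factorial_mul_factorial, one_mul]

theorem natDegree_mpowPoly_le {M : List Ω → K} (hM : M [] = 1) (w : List Ω) :
    (mpowPoly M w).natDegree ≤ w.length := by
  refine natDegree_le_iff_coeff_eq_zero.2 fun n hn => ?_
  rw [coeff_mpowPoly hM, mpow_eq_zero_of_length_lt (mlog_nil M) hn, mul_zero]

theorem expMould_mlog {M : List Ω → K} (hM : M [] = 1) : expMould (mlog M) = M := by
  funext w
  calc expMould (mlog M) w
      = (mpowPoly M w).eval ((1 : ℕ) : K) := by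
        rw [eval_eq_sum_range' (Nat.lt_succ_of_le (natDegree_mpowPoly_le hM w))]
        simp only [expMould, coeff_mpowPoly hM, Nat.cast_one, one_pow, mul_one]
    _ = M w := by rw [eval_natCast_mpowPoly hM, mpow_one]

theorem Symetral.mpowPoly {M : List Ω → K} (hM : Symetral M) : Symetral (mpowPoly M) := by
  refine ⟨mpowPoly_nil M, fun u v => eq_of_forall_eval_natCast_eq fun k => ?_⟩
  have eval_comp_mpowPoly : evalRingHom (k : K) ∘ Moulds.mpowPoly M = Moulds.mpow M k :=
    funext (eval_natCast_mpowPoly hM.1 k)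
  rw [← coe_evalRingHom, map_shuffleSum, eval_comp_mpowPoly, (hM.mpow k).2, map_mul,
    ← eval_comp_mpowPoly, Function.comp_apply, Function.comp_apply]

theorem Symetral.alternal_mlog {M : List Ω → K} (hM : Symetral M) : Alternal (mlog M) := by
  refine ⟨mlog_nil M, fun u v hu hv => ?_⟩
  have mone_of_ne_nil {w : List Ω} (hw : w ≠ []) : (mone w : K) = 0 := by
    cases w with
    | nil => contradiction
    | cons => rfl
  calc shuffleSum (mlog M) u v
      = (shuffleSum (Moulds.mpowPoly M) u v).coeff 1 :=
        (map_shuffleSum (lcoeff K 1) (Moulds.mpowPoly M) u v).symm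
    _ = mone u * mlog M v + mlog M u * mone v := by
        rw [hM.mpowPoly.2, mul_coeff_one, coeff_zero_mpowPoly hM.1, coeff_zero_mpowPoly hM.1,
          mlog, mlog]
    _ = 0 := by rw [mone_of_ne_nil hu, mone_of_ne_nil hv, zero_mul, mul_zero, add_zero]

end Logarithm

theorem symetral_is_exp_of_alternal (M : List Ω → K) (hM : Symetral M) :
    ∃ N : List Ω → K, Alternal N ∧ M = expMould N :=
  ⟨mlog M, hM.alternal_mlog, (expMould_mlog hM.1).symm⟩

end Moulds
end
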